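/- For every τ ∈ ℝ, τ ≠ 0, and every x ∈ (0,1), the imaginary part of ζ(x+iτ)/(x+iτ) equals -τ/((1-x)² + τ²) + ∫₀^∞ {exp(u)} exp(-x·u) sin(τ·u) du. -/

import Mathlib

/-!
For `1 < re s`, Abel summation gives `ζ(s) = s ∫₁^∞ ⌊t⌋ t^{-s-1} dt`, and `t = e^u` turns this into
`s` times the Laplace transform of `u ↦ ⌊e^u⌋ = e^u - {e^u}`. The Laplace transform of `e^u` is
`1 / (s - 1)`, while that of the bounded function `{e^u}` converges and is holomorphic for
`0 < re s`. Hence `ζ(s) / s = 1 / (s - 1) - ∫₀^∞ {e^u} e^{-su} du` continues to that half-plane,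
minus the pole `s = 1`, and it remains to take imaginary parts.
-/

open MeasureTheory Complex Real

section LaplaceTransform

variable {E : Type*} [NormedAddCommGroup E] [NormedSpace ℂ E]

/-- Absolute convergence of the integral defining `laplaceTransform g s`, the analogue of
`MellinConvergent`. -/
def LaplaceConvergent (g : ℝ → E) (s : ℂ) : Prop :=
  IntegrableOn (fun u : ℝ ↦ cexp (-s * u) • g u) (Set.Ioi 0)

/-- The one-sided Laplace transform `∫₀^∞ e^{-su} g(u) du`; only the values of `g` on `(0, ∞)`
matter. It is the integral's junk value `0` when `LaplaceConvergent g s` fails. -/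
noncomputable def laplaceTransform (g : ℝ → E) (s : ℂ) : E :=
  ∫ u in Set.Ioi (0 : ℝ), cexp (-s * u) • g u

lemma laplaceConvergent_of_norm_le {g : ℝ → E} {C : ℝ} {s : ℂ}
    (hg : AEStronglyMeasurable g (volume.restrict (Set.Ioi 0)))
    (hC : ∀ᵐ u ∂volume.restrict (Set.Ioi 0), ‖g u‖ ≤ C) (hs : 0 < s.re) :
    LaplaceConvergent g s :=
  (integrableOn_exp_mul_complex_Ioi (by simpa using hs) 0).smul_bdd C hg hC

lemma LaplaceConvergent.aestronglyMeasurable {g : ℝ → E} {s : ℂ} (hg : LaplaceConvergent g s) :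
    AEStronglyMeasurable g (volume.restrict (Set.Ioi 0)) := by
  have hexp : Continuous fun u : ℝ ↦ cexp (s * u) := by fun_prop
  refine (hexp.aestronglyMeasurable.smul (Integrable.aestronglyMeasurable hg)).congr
    (.of_forall fun u ↦ ?_)
  simp [smul_smul, ← Complex.exp_add]

lemma LaplaceConvergent.mono {g : ℝ → E} {a s : ℂ} (hg : LaplaceConvergent g a)
    (has : a.re ≤ s.re) : LaplaceConvergent g s := by
  have hexp : Continuous fun u : ℝ ↦ cexp (-s * u) := by fun_prop
  refine Integrable.mono hg (hexp.aestronglyMeasurable.smul hg.aestronglyMeasurable) ?_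
  filter_upwards [ae_restrict_mem measurableSet_Ioi] with u (hu : 0 < u)
  simp only [norm_smul, Complex.norm_exp, re_mul_ofReal, neg_re]
  gcongr

lemma norm_neg_mul_cexp_smul_le {a z : ℂ} {δ u : ℝ} (v : E) (hδ : 0 < δ)
    (hz : a.re + δ ≤ z.re) (hu : 0 ≤ u) :
    ‖(-(u : ℂ) * cexp (-z * u)) • v‖ ≤ δ⁻¹ * ‖cexp (-a * u) • v‖ := by
  -- `δ * u ≤ exp (δ * u)` trades the factor `u` for moving the abscissa from `z.re` to `z.re - δ`.
  have hexp : u * rexp (-z.re * u) ≤ δ⁻¹ * rexp (-a.re * u) :=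
    calc u * rexp (-z.re * u) = δ⁻¹ * (δ * u * rexp (-z.re * u)) := by field_simp
      _ ≤ δ⁻¹ * (rexp (δ * u) * rexp (-z.re * u)) := by
        gcongr
        linarith [Real.add_one_le_exp (δ * u)]
      _ ≤ δ⁻¹ * rexp (-a.re * u) := by
        rw [← Real.exp_add, ← add_mul]
        gcongr
        linarith
  simpa [norm_smul, Complex.norm_exp, abs_of_nonneg hu, mul_assoc] using
    mul_le_mul_of_nonneg_right hexp (norm_nonneg v)

lemma differentiableAt_laplaceTransform {g : ℝ → E} {a s : ℂ} (hg : LaplaceConvergent g a)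
    (has : a.re < s.re) : DifferentiableAt ℂ (laplaceTransform g) s := by
  have hmeas {k : ℝ → ℂ} (hk : Continuous k) :
      AEStronglyMeasurable (fun u ↦ k u • g u) (volume.restrict (Set.Ioi 0)) :=
    hk.aestronglyMeasurable.smul hg.aestronglyMeasurable
  obtain ⟨b, hab, hbs⟩ := exists_between has
  have hδ : 0 < b - a.re := sub_pos.mpr hab
  have hnhds : {z : ℂ | b < z.re} ∈ nhds s :=
    (isOpen_lt continuous_const continuous_re).mem_nhds hbs
  have hbound : ∀ᵐ u : ℝ ∂volume.restrict (Set.Ioi 0), ∀ z ∈ {z : ℂ | b < z.re},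
      ‖(-(u : ℂ) * cexp (-z * u)) • g u‖ ≤ (b - a.re)⁻¹ * ‖cexp (-a * u) • g u‖ :=
    (ae_restrict_mem measurableSet_Ioi).mono fun u (hu : 0 < u) z (hz : b < z.re) ↦
      norm_neg_mul_cexp_smul_le (g u) hδ (by linarith) hu.le
  have hderiv (u : ℝ) (z : ℂ) :
      HasDerivAt (fun z ↦ cexp (-z * u) • g u) ((-(u : ℂ) * cexp (-z * u)) • g u) z := by
    simpa [mul_comm] using (((hasDerivAt_neg z).mul_const (u : ℂ)).cexp).smul_const (g u)
  exact (hasDerivAt_integral_of_dominated_loc_of_deriv_le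
    (F := fun z (u : ℝ) ↦ cexp (-z * u) • g u)
    (F' := fun z (u : ℝ) ↦ (-(u : ℂ) * cexp (-z * u)) • g u) hnhds
    (.of_forall fun z ↦ hmeas (by fun_prop)) (hg.mono has.le) (hmeas (by fun_prop)) hbound
    ((Integrable.norm hg).const_mul _) (.of_forall fun u z _ ↦ hderiv u z)).2.differentiableAt

lemma laplaceTransform_sub {f g : ℝ → E} {s : ℂ} (hf : LaplaceConvergent f s)
    (hg : LaplaceConvergent g s) :
    laplaceTransform (fun u ↦ f u - g u) s = laplaceTransform f s - laplaceTransform g s := by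
  simp only [laplaceTransform, smul_sub]
  exact integral_sub hf hg

lemma laplaceTransform_comp_exp (f : ℝ → E) (s : ℂ) :
    laplaceTransform (fun u ↦ f (rexp u)) s =
      ∫ t in Set.Ioi (1 : ℝ), (t : ℂ) ^ (-(s + 1)) • f t := by
  rw [← Real.exp_zero, ← integral_comp_exp_Ioi]
  refine setIntegral_congr_fun measurableSet_Ioi fun u _ ↦ ?_
  have hcpow : (rexp u : ℂ) * (rexp u : ℂ) ^ (-(s + 1)) = cexp (-s * u) := by
    rw [cpow_def_of_ne_zero (ofReal_ne_zero.mpr (Real.exp_ne_zero u)),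
      ← ofReal_log (exp_nonneg u), Real.log_exp, ofReal_exp, ← Complex.exp_add]
    ring_nf
  simp only [← hcpow, mul_smul, coe_smul]

end LaplaceTransform

lemma cexp_neg_mul_mul_rexp (s : ℂ) (u : ℝ) :
    cexp (-s * u) * (rexp u : ℂ) = cexp ((1 - s) * u) := by
  rw [ofReal_exp, ← Complex.exp_add]
  ring_nf

lemma laplaceConvergent_rexp {s : ℂ} (hs : 1 < s.re) :
    LaplaceConvergent (fun u ↦ (rexp u : ℂ)) s := by
  simp only [LaplaceConvergent, smul_eq_mul, cexp_neg_mul_mul_rexp]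
  exact integrableOn_exp_mul_complex_Ioi (by simpa using hs) 0

lemma laplaceTransform_rexp {s : ℂ} (hs : 1 < s.re) :
    laplaceTransform (fun u ↦ (rexp u : ℂ)) s = 1 / (s - 1) := by
  simp only [laplaceTransform, smul_eq_mul, cexp_neg_mul_mul_rexp]
  rw [integral_exp_mul_complex_Ioi (by simpa using hs), ofReal_zero, mul_zero, Complex.exp_zero,
    ← neg_sub s 1, neg_div_neg_eq]

lemma im_laplaceTransform_ofReal {g : ℝ → ℝ} {s : ℂ}
    (hg : LaplaceConvergent (fun u ↦ (g u : ℂ)) s) :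
    (laplaceTransform (fun u ↦ (g u : ℂ)) s).im =
      -∫ u in Set.Ioi (0 : ℝ), g u * rexp (-s.re * u) * Real.sin (s.im * u) := by
  have him (u : ℝ) : (cexp (-s * u) • (g u : ℂ)).im =
      -(g u * rexp (-s.re * u) * Real.sin (s.im * u)) := by
    simp only [smul_eq_mul, mul_im, mul_re, exp_im, neg_re, neg_im, ofReal_re, ofReal_im, mul_zero,
      zero_add, sub_zero, neg_mul, mul_neg, Real.sin_neg]
    ring
  rw [laplaceTransform, ← integral_neg]
  simp only [← him]
  exact (integral_im hg).symm

/-- The fractional part `{e^u}`, complex-valued so that its Laplace transform is defined at complex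
arguments. -/
noncomputable def fractExp (u : ℝ) : ℂ := (Int.fract (rexp u) : ℝ)

lemma laplaceConvergent_fractExp {s : ℂ} (hs : 0 < s.re) : LaplaceConvergent fractExp s := by
  have hmeas : Measurable fractExp :=
    measurable_ofReal.comp (measurable_fract.comp Real.measurable_exp)
  refine laplaceConvergent_of_norm_le (C := 1) hmeas.aestronglyMeasurable (.of_forall fun u ↦ ?_) hs
  rw [fractExp, norm_real, Real.norm_of_nonneg (Int.fract_nonneg _)]
  exact (Int.fract_lt_one _).le

lemma differentiableAt_laplaceTransform_fractExp {s : ℂ} (hs : 0 < s.re) :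
    DifferentiableAt ℂ (laplaceTransform fractExp) s :=
  differentiableAt_laplaceTransform (a := (s.re / 2 : ℝ))
    (laplaceConvergent_fractExp (by simpa using hs)) (by simpa using hs)

lemma riemannZeta_eq_mul_laplaceTransform_floor {s : ℂ} (hs : 1 < s.re) :
    riemannZeta s = s * laplaceTransform (fun u ↦ (⌊rexp u⌋₊ : ℂ)) s := by
  have hO : (fun n ↦ ∑ k ∈ Finset.Icc 1 n, (1 : ℕ → ℂ) k) =O[Filter.atTop]
      fun n ↦ (n : ℝ) ^ (1 : ℝ) :=
    .of_bound 1 (.of_forall fun n ↦ by simp)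
  rw [← LSeries_one_eq_riemannZeta hs,
    LSeries_eq_mul_integral 1 zero_le_one hs (LSeriesSummable_one_iff.mpr hs) hO,
    laplaceTransform_comp_exp (fun t ↦ (⌊t⌋₊ : ℂ))]
  simp [mul_comm]

lemma natFloor_rexp_eq_sub_fractExp (u : ℝ) : (⌊rexp u⌋₊ : ℂ) = rexp u - fractExp u := by
  rw [fractExp, ← ofReal_sub, Int.self_sub_fract, ← natCast_floor_eq_intCast_floor (exp_nonneg u),
    ofReal_natCast]

lemma riemannZeta_eq_sub_mul_laplaceTransform_of_one_lt_re {s : ℂ} (hs : 1 < s.re) :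
    riemannZeta s = s / (s - 1) - s * laplaceTransform fractExp s := by
  rw [riemannZeta_eq_mul_laplaceTransform_floor hs]
  simp only [natFloor_rexp_eq_sub_fractExp]
  rw [laplaceTransform_sub (laplaceConvergent_rexp hs)
    (laplaceConvergent_fractExp (zero_lt_one.trans hs)), laplaceTransform_rexp hs]
  ring

lemma riemannZeta₁_eq_sub_mul_laplaceTransform {s : ℂ} (hs : 0 < s.re) :
    riemannZeta₁ s = s - (s - 1) * (s * laplaceTransform fractExp s) := by
  have hopen (c : ℝ) : IsOpen {z : ℂ | c < z.re} := isOpen_lt continuous_const continuous_re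
  have hleft : AnalyticOnNhd ℂ riemannZeta₁ {z | 0 < z.re} :=
    differentiable_riemannZeta₁.differentiableOn.analyticOnNhd (hopen 0)
  have hright : AnalyticOnNhd ℂ (fun z ↦ z - (z - 1) * (z * laplaceTransform fractExp z))
      {z | 0 < z.re} := by
    refine DifferentiableOn.analyticOnNhd (fun z hz ↦ ?_) (hopen 0)
    have hdiff := differentiableAt_laplaceTransform_fractExp hz
    exact DifferentiableAt.differentiableWithinAt (by fun_prop)
  refine hleft.eqOn_of_preconnected_of_eventuallyEq hright
    (convex_halfSpace_re_gt 0).isPreconnected (z₀ := 2) (by simp) ?_ hs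
  filter_upwards [(hopen 1).mem_nhds (show (2 : ℂ) ∈ {z | 1 < z.re} by simp)] with z hz
  have hz1 : z ≠ 1 := by
    rintro rfl
    simp at hz
  have hz0 : z - 1 ≠ 0 := sub_ne_zero.mpr hz1
  have hzeta := riemannZeta_eq_inv_sub_mul hz1
  rw [riemannZeta_eq_sub_mul_laplaceTransform_of_one_lt_re hz] at hzeta
  field_simp at hzeta
  linear_combination -hzeta

lemma riemannZeta_eq_sub_mul_laplaceTransform {s : ℂ} (hs : 0 < s.re) (hs1 : s ≠ 1) :
    riemannZeta s = s / (s - 1) - s * laplaceTransform fractExp s := by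
  have hs0 : s - 1 ≠ 0 := sub_ne_zero.mpr hs1
  rw [riemannZeta_eq_inv_sub_mul hs1, riemannZeta₁_eq_sub_mul_laplaceTransform hs]
  field_simp

theorem im_zeta_div_s_general {s : ℂ} (hs : 0 < s.re) (hs1 : s ≠ 1) :
    (riemannZeta s / s).im =
      -s.im / ((1 - s.re) ^ 2 + s.im ^ 2) +
        ∫ u in Set.Ioi (0 : ℝ),
          Int.fract (rexp u) * rexp (-s.re * u) * Real.sin (s.im * u) := by
  have hs0 : s ≠ 0 := ne_zero_of_re_pos hs
  have hdiv : riemannZeta s / s = (s - 1)⁻¹ - laplaceTransform fractExp s := by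
    rw [riemannZeta_eq_sub_mul_laplaceTransform hs hs1]
    field_simp
  have hpole : ((s - 1)⁻¹).im = -s.im / ((1 - s.re) ^ 2 + s.im ^ 2) := by
    rw [inv_im, normSq_apply, sub_re, sub_im, one_re, one_im]
    ring
  have hlaplace : (laplaceTransform fractExp s).im =
      -∫ u in Set.Ioi (0 : ℝ), Int.fract (rexp u) * rexp (-s.re * u) * Real.sin (s.im * u) :=
    im_laplaceTransform_ofReal (laplaceConvergent_fractExp hs)
  rw [hdiv, sub_im, hpole, hlaplace, sub_neg_eq_add]

theorem im_zeta_div_s (τ : ℝ) (hτ : τ ≠ 0) (x : ℝ) (hx : x ∈ Set.Ioo (0 : ℝ) 1) :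
    (riemannZeta (x + τ * Complex.I) / (x + τ * Complex.I)).im =
      -τ / ((1 - x) ^ 2 + τ ^ 2) +
        ∫ u in Set.Ioi (0 : ℝ),
          Int.fract (Real.exp u) * Real.exp (-x * u) * Real.sin (τ * u) := by
  have hs1 : (x + τ * I : ℂ) ≠ 1 := fun h ↦ hτ (by simpa using congrArg im h)
  simpa using im_zeta_div_s_general (by simpa using hx.1) hs1
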